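/- Assume E₀, U, L, K satisfy the hypothesis and define h := {(x,y) ∈ BD(G) ⊕ BD(G) : π*_{BD(G)}x ∈ E₀ and K^⋄Kπ*_{BD(G)}x − L^⋄π*_{BD(D)}Ġy ∈ E}. Then for every (x,y) ∈ h one has Re⟨x,y⟩_{BD(G)} = ‖Kπ*_{BD(G)}x‖²_U; in particular Re⟨x,y⟩_{BD(G)} ≥ 0. -/

import Mathlib

/-!
Testing `e = K^⋄Kx − L^⋄Gy` on `D(G₀)`, where `K` vanishes, gives `⟪e, v⟫ = −⟪Gy, Gv⟫`. Since `y` is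
orthogonal to `D(G₀)` in `D_G`, this is `⟪y, v⟫`, so `e = y` by density. Hence
`⟪y, z⟫_{D_G} = ⟪Kx, Kz⟫` for all `z ∈ E₀`, and `z = x` gives `⟪x, y⟫_{D_G} = ‖Kx‖²`.
-/

open scoped ComplexInnerProductSpace
open Filter Topology Classical

noncomputable section

variable {E H : Type*}
  [NormedAddCommGroup E] [InnerProductSpace ℂ E] [CompleteSpace E]
  [NormedAddCommGroup H] [InnerProductSpace ℂ H] [CompleteSpace H]

/-- The operator `G := (−D₀)*`. -/
def Gop (D₀ : H →ₗ.[ℂ] E) : E →ₗ.[ℂ] H := (-D₀).adjoint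

/-- The operator `D := −(G₀)*`. -/
def Dop (G₀ : E →ₗ.[ℂ] H) : H →ₗ.[ℂ] E := -(G₀.adjoint)

/-- Pointwise application of `G`, defined to be `0` off the domain. -/
def Gap (D₀ : H →ₗ.[ℂ] E) (u : E) : H :=
  if h : u ∈ (Gop D₀).domain then Gop D₀ ⟨u, h⟩ else 0

/-- Pointwise application of `D`, defined to be `0` off the domain. -/
def Dap (G₀ : E →ₗ.[ℂ] H) (w : H) : E :=
  if h : w ∈ (Dop G₀).domain then Dop G₀ ⟨w, h⟩ else 0

/-- The graph inner product of `D_G`: `⟪x,y⟫_E + ⟪Gx,Gy⟫_H`. -/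
def innG (D₀ : H →ₗ.[ℂ] E) (x y : E) : ℂ := ⟪x, y⟫ + ⟪Gap D₀ x, Gap D₀ y⟫

/-- The graph inner product of `D_D`: `⟪x,y⟫_H + ⟪Dx,Dy⟫_E`. -/
def innD (G₀ : E →ₗ.[ℂ] H) (x y : H) : ℂ := ⟪x, y⟫ + ⟪Dap G₀ x, Dap G₀ y⟫

/-- The boundary data space `BD(G)`, the orthogonal complement of `D(G₀)` in `D_G`. -/
def BDG (G₀ : E →ₗ.[ℂ] H) (D₀ : H →ₗ.[ℂ] E) : Set E :=
  {u | u ∈ (Gop D₀).domain ∧ ∀ v ∈ G₀.domain, innG D₀ u v = 0}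

/-- The boundary data space `BD(D)`, the orthogonal complement of `D(D₀)` in `D_D`. -/
def BDD (G₀ : E →ₗ.[ℂ] H) (D₀ : H →ₗ.[ℂ] E) : Set H :=
  {w | w ∈ (Dop G₀).domain ∧ ∀ v ∈ D₀.domain, innD G₀ w v = 0}

variable {U E₀ : Type*}
  [NormedAddCommGroup U] [InnerProductSpace ℂ U] [CompleteSpace U]
  [NormedAddCommGroup E₀] [InnerProductSpace ℂ E₀] [CompleteSpace E₀]

/-- Closedness of the operator `(L,K) : E₀ ⊆ E → H ⊕ U`: whenever `wₙ` in `E₀` with `wₙ → w`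
in `E`, `Lwₙ → v` in `H` and `Kwₙ → z` in `U`, then `w ∈ E₀`, `Lw = v` and `Kw = z`. -/
def ClosedLK (j : E₀ →L[ℂ] E) (L : E₀ →L[ℂ] H) (K : E₀ →L[ℂ] U) : Prop :=
  ∀ (f : ℕ → E₀) (w : E) (v : H) (z : U),
    Tendsto (fun n => j (f n)) atTop (nhds w) →
    Tendsto (fun n => L (f n)) atTop (nhds v) →
    Tendsto (fun n => K (f n)) atTop (nhds z) →
    ∃ w₀ : E₀, j w₀ = w ∧ L w₀ = v ∧ K w₀ = z

/-- The boundary relation `h` associated with `A`: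
`h = {(x,y) ∈ BD(G) ⊕ BD(G) : π*x ∈ E₀, K^⋄Kπ*x − L^⋄π*Ġy ∈ E}`. -/
def hRel (G₀ : E →ₗ.[ℂ] H) (D₀ : H →ₗ.[ℂ] E) (j : E₀ →L[ℂ] E) (L : E₀ →L[ℂ] H)
    (K : E₀ →L[ℂ] U) : Set (E × E) :=
  {p | p.1 ∈ BDG G₀ D₀ ∧ p.2 ∈ BDG G₀ D₀ ∧
    ∃ x₀ : E₀, j x₀ = p.1 ∧
      ∃ e : E, ∀ z : E₀, (⟪e, j z⟫ : ℂ) = ⟪K x₀, K z⟫ - ⟪Gap D₀ p.2, L z⟫}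

section BoundaryData

open scoped InnerProductSpace ComplexConjugate

variable {𝕜 V W F ι : Type*} [RCLike 𝕜]
  [NormedAddCommGroup V] [InnerProductSpace 𝕜 V]
  [SeminormedAddCommGroup W] [InnerProductSpace 𝕜 W]
  [SeminormedAddCommGroup F] [InnerProductSpace 𝕜 F]

/-- The graph inner product on the domain of an arbitrary, not necessarily closed, operator `G`. -/
def graphInner (G : V →ₗ.[𝕜] W) (x y : G.domain) : 𝕜 := ⟪(x : V), y⟫_𝕜 + ⟪G x, G y⟫_𝕜

/-- The boundary data of `G` relative to `S`, i.e. the orthogonal complement of `S ∩ D(G)` with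
respect to the graph inner product. The space `BD(G)` is the case `S = D(G₀)`. -/
def boundaryData (G : V →ₗ.[𝕜] W) (S : Set V) : Set G.domain :=
  {u | ∀ v : G.domain, (v : V) ∈ S → graphInner G u v = 0}

theorem graphInner_conj_symm (G : V →ₗ.[𝕜] W) (x y : G.domain) :
    conj (graphInner G y x) = graphInner G x y := by
  simp only [graphInner, map_add, inner_conj_symm]

-- `L` is encoded as `G ∘ j`: the hypothesis `he` below says that `e` represents `K^⋄k − L^⋄Gy`.
variable {G : V →ₗ.[𝕜] W} {S : Set V} {j : ι → G.domain} {K : ι → F} {y : G.domain} {e : V} {k : F}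

theorem eq_of_mem_boundaryData_of_forall_inner_eq_sub (hS : Dense S)
    (hSj : ∀ v ∈ S, ∃ z, (j z : V) = v) (hK : ∀ z, (j z : V) ∈ S → K z = 0)
    (hy : y ∈ boundaryData G S)
    (he : ∀ z, ⟪e, (j z : V)⟫_𝕜 = ⟪k, K z⟫_𝕜 - ⟪G y, G (j z)⟫_𝕜) :
    e = y := by
  refine hS.eq_of_inner_left 𝕜 fun v hv ↦ ?_
  obtain ⟨z, rfl⟩ := hSj v hv
  calc ⟪e, (j z : V)⟫_𝕜 = -⟪G y, G (j z)⟫_𝕜 := by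
        rw [he, hK z hv, inner_zero_right, zero_sub]
    _ = ⟪(y : V), j z⟫_𝕜 := (eq_neg_of_add_eq_zero_left (hy (j z) hv)).symm

theorem graphInner_eq_inner_of_mem_boundaryData (hS : Dense S)
    (hSj : ∀ v ∈ S, ∃ z, (j z : V) = v) (hK : ∀ z, (j z : V) ∈ S → K z = 0)
    (hy : y ∈ boundaryData G S)
    (he : ∀ z, ⟪e, (j z : V)⟫_𝕜 = ⟪k, K z⟫_𝕜 - ⟪G y, G (j z)⟫_𝕜) (z : ι) :
    graphInner G y (j z) = ⟪k, K z⟫_𝕜 := by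
  obtain rfl := eq_of_mem_boundaryData_of_forall_inner_eq_sub hS hSj hK hy he
  rw [graphInner, he z, sub_add_cancel]

theorem hRel_re_inner_eq_norm_sq_general (hS : Dense S)
    (hSj : ∀ v ∈ S, ∃ z, (j z : V) = v) (hK : ∀ z, (j z : V) ∈ S → K z = 0)
    (hy : y ∈ boundaryData G S) {x : ι}
    (he : ∀ z, ⟪e, (j z : V)⟫_𝕜 = ⟪K x, K z⟫_𝕜 - ⟪G y, G (j z)⟫_𝕜) :
    graphInner G (j x) y = (‖K x‖ : 𝕜) ^ 2 := by
  rw [← graphInner_conj_symm, graphInner_eq_inner_of_mem_boundaryData hS hSj hK hy he,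
    inner_conj_symm, inner_self_eq_norm_sq_to_K]

end BoundaryData

section Coe

omit [CompleteSpace E]

theorem Gap_coe {D₀ : H →ₗ.[ℂ] E} (u : (Gop D₀).domain) : Gap D₀ u = Gop D₀ u :=
  dif_pos u.2

theorem innG_coe {D₀ : H →ₗ.[ℂ] E} (x y : (Gop D₀).domain) :
    innG D₀ x y = graphInner (Gop D₀) x y := by
  rw [innG, Gap_coe, Gap_coe, graphInner]

theorem exists_mem_boundaryData_of_mem_BDG {G₀ : E →ₗ.[ℂ] H} {D₀ : H →ₗ.[ℂ] E} {u : E}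
    (hu : u ∈ BDG G₀ D₀) :
    ∃ u' ∈ boundaryData (Gop D₀) G₀.domain, (u' : E) = u :=
  ⟨⟨u, hu.1⟩, fun v hv ↦ (innG_coe _ v).symm.trans (hu.2 v hv), rfl⟩

end Coe

/-- For every `(x,y) ∈ h` one has `Re⟪x,y⟫_{BD(G)} = ‖Kπ*_{BD(G)}x‖²_U`; in particular
`Re⟪x,y⟫_{BD(G)} ≥ 0`. -/
theorem hRel_re_inner_eq_norm_sq (G₀ : E →ₗ.[ℂ] H) (D₀ : H →ₗ.[ℂ] E)
    (hG₀dense : Dense (G₀.domain : Set E)) (hD₀dense : Dense (D₀.domain : Set H))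
    (hG₀closed : G₀.IsClosed) (hD₀closed : D₀.IsClosed)
    (hsub : G₀ ≤ Gop D₀)
    (j : E₀ →L[ℂ] E) (L : E₀ →L[ℂ] H) (K : E₀ →L[ℂ] U)
    (hj_inj : Function.Injective j) (hj_dense : DenseRange j)
    (hclosed : ClosedLK j L K)
    (hLsubG : ∀ x : E₀, j x ∈ (Gop D₀).domain ∧ L x = Gap D₀ (j x))
    (hG₀subL : ∀ u ∈ G₀.domain, ∃ x : E₀, j x = u)
    (hK0 : ∀ x : E₀, j x ∈ G₀.domain → K x = 0) :
    ∀ p ∈ hRel G₀ D₀ j L K, ∀ x₀ : E₀, j x₀ = p.1 →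
      (innG D₀ p.1 p.2).re = ‖K x₀‖ ^ 2 ∧ 0 ≤ (innG D₀ p.1 p.2).re := by
  rintro ⟨_, _⟩ ⟨_, hy, x, rfl, e, he⟩ x₀ hx₀
  obtain rfl := hj_inj hx₀
  obtain ⟨y, hy_bd, rfl⟩ := exists_mem_boundaryData_of_mem_BDG hy
  let j' (z : E₀) : (Gop D₀).domain := ⟨j z, (hLsubG z).1⟩
  have hL (z : E₀) : L z = Gop D₀ (j' z) := (hLsubG z).2.trans (Gap_coe (j' z))
  have inner_eq : graphInner (Gop D₀) (j' x₀) y = (‖K x₀‖ : ℂ) ^ 2 :=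
    hRel_re_inner_eq_norm_sq_general (j := j') hG₀dense hG₀subL hK0 hy_bd fun z ↦ by
      rw [← hL, ← Gap_coe, he]
  have re_eq : (innG D₀ (j x₀) y).re = ‖K x₀‖ ^ 2 := by
    rw [innG_coe (j' x₀), inner_eq, ← Complex.ofReal_pow, Complex.ofReal_re]
  exact ⟨re_eq, re_eq ▸ sq_nonneg _⟩
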